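/- arXiv:2009.05428 — 6 statements merged into one kernel-verified Lean document; each statement's English description precedes it below -/
import Mathlib

section
/- For every integer $k \ge 2$, setting $\Delta = 2^{2^k}$, there exist finite bipartite graphs $G$ and $H$ with bipartitions $(A_G,B_G)$ and $(A_H,B_H)$ respectively, such that $H$ is a bipartite correspondence-cover of $G$ with respect to a map $L$, the maximum degree of $G$ is $\Delta$, $|L(v)| = \Delta/\log_4 \Delta$ for all $v \in A_G$ (where $\log_4$ is the logarithm in base $4$; note $\Delta/\log_4 \Delta$ is an integer here), $|L(w)| = 2$ for all $w \in B_G$, and $H$ does not admit an independent transversal with respect to $L$. -/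
/-!
The construction is explicit. Put `n = 2 ^ k`, `t = 2 ^ (n - k)` and take `G = K_{Δ,Δ}`, with
`A_G` the set of Boolean vectors `p` of length `n` and `B_G` the set of positions `(b, j)` with
`b < t` and `j < n` (so `B_G` consists of `t` blocks of length `n`). A vertex `p` of `A_G` has the
`2 t = Δ / log₄ Δ` colours `(b, c)` with `b < t` and `c` a Boolean; a vertex of `B_G` has the two
Boolean colours. Colour `(b, c)` of `p` conflicts with colour `d` of `(b', j)` exactly when `b = b'`
and `c = d xor p j`.

Suppose an independent transversal chooses the colour `f (b, j)` at each `(b, j)`, and `(b, c)` at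
`p`. Independence says `c ≠ f (b, j) xor p j` for all `j`, so `p` is determined by `(b, c)`. Hence
the map sending `p` to its colour is injective from a set of size `Δ` to one of size `2 t < Δ`
(`no_transversal`), which is absurd.
-/

/-- `H` is a cover of `G` with respect to `L`: the sets `L v` partition `V(H)`, and whenever
`v v'` are non-adjacent in `G` (including `v = v'`) there are no edges of `H` between
`L v` and `L v'`. -/
def IsCoverWrt {V W : Type*} (G : SimpleGraph V) (H : SimpleGraph W) (L : V → Set W) : Prop :=
  (∀ w : W, ∃! v : V, w ∈ L v) ∧
  ∀ ⦃v v' : V⦄, ¬ G.Adj v v' → ∀ x ∈ L v, ∀ y ∈ L v', ¬ H.Adj x y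

/-- `H` is a correspondence-cover of `G` with respect to `L`: a cover such that for every edge
`v v'` of `G` the bipartite subgraph of `H` induced between `L v` and `L v'` is a matching. -/
def IsCorrespondenceCoverWrt {V W : Type*} (G : SimpleGraph V) (H : SimpleGraph W)
    (L : V → Set W) : Prop :=
  IsCoverWrt G H L ∧
  ∀ ⦃v v' : V⦄, G.Adj v v' → ∀ x ∈ L v, ∀ y ∈ L v', ∀ y' ∈ L v',
    H.Adj x y → H.Adj x y' → y = y'

/-- `(A, B)` is a bipartition of the graph `G`. -/
def IsBipartitionOf {V : Type*} (G : SimpleGraph V) (A B : Set V) : Prop :=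
  A ∪ B = Set.univ ∧ Disjoint A B ∧
  ∀ ⦃u v : V⦄, G.Adj u v → (u ∈ A ∧ v ∈ B) ∨ (u ∈ B ∧ v ∈ A)

/-- `H` is a bipartite correspondence-cover of `G`, with respect to the bipartitions
`(AG, BG)` of `G` and `(AH, BH)` of `H` and the map `L`. -/
def IsBipartiteCorrespondenceCover {V W : Type*} (G : SimpleGraph V) (H : SimpleGraph W)
    (AG BG : Set V) (AH BH : Set W) (L : V → Set W) : Prop :=
  IsBipartitionOf G AG BG ∧ IsBipartitionOf H AH BH ∧
  IsCorrespondenceCoverWrt G H L ∧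
  (∀ v ∈ AG, L v ⊆ AH) ∧ (∀ w ∈ BG, L w ⊆ BH)

/-- `H` admits an independent transversal with respect to `L`: an independent set of `H`
containing exactly one vertex from each part `L v`. -/
def HasIndepTransversal {V W : Type*} (H : SimpleGraph W) (L : V → Set W) : Prop :=
  ∃ T : Set W, (∀ x ∈ T, ∀ y ∈ T, ¬ H.Adj x y) ∧ ∀ v : V, ∃! w : W, w ∈ L v ∧ w ∈ T

/-- The degree of a vertex, as the number of its neighbours. -/
noncomputable def deg {W : Type*} (H : SimpleGraph W) (x : W) : ℕ := (H.neighborSet x).ncard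

namespace CoverConstruction

/-- The vertices of `G`: Boolean vectors of length `n` on side `A`, and positions in `t` blocks of
length `n` on side `B`. -/
abbrev Vert (n t : ℕ) : Type := (Fin n → Bool) ⊕ (Fin t × Fin n)

/-- The vertices of `H`: pairs of a vertex of `G` and a colour for it. -/
abbrev CVert (n t : ℕ) : Type := ((Fin n → Bool) × (Fin t × Bool)) ⊕ ((Fin t × Fin n) × Bool)

/-- The vertex of `G` that a vertex of the cover lies above. -/
def proj {n t : ℕ} : CVert n t → Vert n t := Sum.map Prod.fst Prod.fst

/-- The colour `(b, c)` of the vector `p` conflicts with the colour `d` of the position `(b', j)`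
when `b = b'` and `c = d xor p j`. -/
def Conflict {n t : ℕ} (x : (Fin n → Bool) × (Fin t × Bool)) (y : (Fin t × Fin n) × Bool) : Prop :=
  x.2.1 = y.1.1 ∧ x.2.2 = xor y.2 (x.1 y.1.2)

/-- The cover graph `H`: the symmetric bipartite graph of the relation `Conflict`. -/
def coverGraph (n t : ℕ) : SimpleGraph (CVert n t) where
  Adj
    | .inl x, .inr y => Conflict x y
    | .inr y, .inl x => Conflict x y
    | _, _ => False
  symm := ⟨by rintro (x | x) (y | y) h <;> exact h⟩
  loopless := ⟨by rintro (x | x) h <;> exact h⟩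

/-- The part of the cover above `v`. -/
def fiber {n t : ℕ} (v : Vert n t) : Set (CVert n t) := {w | proj w = v}

/-- In an independent transversal, the colour of a Boolean vector determines the vector, so there
are at least as many colours as vectors. -/
lemma no_transversal {n t : ℕ} (h : t * 2 < 2 ^ n) :
    ¬ HasIndepTransversal (coverGraph n t) (fiber (n := n) (t := t)) := by
  rintro ⟨T, hind, htr⟩
  have hB : ∀ q : Fin t × Fin n, ∃ d : Bool, (Sum.inr (q, d) : CVert n t) ∈ T := by
    intro q
    obtain ⟨w, ⟨hw, hwT⟩, -⟩ := htr (Sum.inr q)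
    rcases w with w | ⟨q', d⟩
    · simp [fiber, proj] at hw
    · obtain rfl : q' = q := by simpa [fiber, proj] using hw
      exact ⟨d, hwT⟩
  have hA : ∀ p : Fin n → Bool, ∃ c : Fin t × Bool, (Sum.inl (p, c) : CVert n t) ∈ T := by
    intro p
    obtain ⟨w, ⟨hw, hwT⟩, -⟩ := htr (Sum.inl p)
    rcases w with ⟨p', c⟩ | w
    · obtain rfl : p' = p := by simpa [fiber, proj] using hw
      exact ⟨c, hwT⟩
    · simp [fiber, proj] at hw
  choose f hf using hB
  choose g hg using hA
  have key : ∀ p j, (g p).2 ≠ xor (f ((g p).1, j)) (p j) := fun p j e =>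
    hind _ (hg p) _ (hf ((g p).1, j)) (show Conflict _ _ from ⟨rfl, e⟩)
  have hinj : Function.Injective g := by
    intro p p' e
    funext j
    have h1 := key p j
    have h2 := key p' j
    rw [← e] at h2
    revert h1 h2
    generalize (g p).2 = c, f ((g p).1, j) = d, p j = x, p' j = y
    revert c d x y
    decide
  have hc := Fintype.card_le_of_injective g hinj
  simp at hc
  omega

lemma isBipartiteCover (n t : ℕ) :
    IsBipartiteCorrespondenceCover (completeBipartiteGraph (Fin n → Bool) (Fin t × Fin n))
      (coverGraph n t) (Set.range Sum.inl) (Set.range Sum.inr)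
      (Set.range Sum.inl) (Set.range Sum.inr) fiber := by
  refine ⟨⟨Set.range_inl_union_range_inr, Set.isCompl_range_inl_range_inr.disjoint, ?_⟩,
    ⟨Set.range_inl_union_range_inr, Set.isCompl_range_inl_range_inr.disjoint, ?_⟩,
    ⟨⟨?_, ?_⟩, ?_⟩, ?_, ?_⟩
  · rintro (u | u) (v | v) h <;> simp_all
  · rintro (u | u) (v | v) h <;> simp_all [coverGraph]
  · exact fun w => ⟨proj w, rfl, fun v hv => hv.symm⟩
  · rintro _ _ h (x | x) rfl (y | y) rfl <;> simp_all [coverGraph, proj]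
  · rintro v v' - x hx y hy y' hy' h h'
    have e : proj y = proj y' := hy.trans hy'.symm
    rcases x with ⟨p, b, c⟩ | ⟨⟨b, j⟩, d⟩ <;> rcases y with ⟨p₁, b₁, c₁⟩ | ⟨⟨b₁, j₁⟩, d₁⟩ <;>
      rcases y' with ⟨p₂, b₂, c₂⟩ | ⟨⟨b₂, j₂⟩, d₂⟩ <;>
      simp_all [coverGraph, Conflict, proj]
  · rintro _ ⟨p, rfl⟩ (x | x) hx <;> simp_all [fiber, proj]
  · rintro _ ⟨p, rfl⟩ (x | x) hx <;> simp_all [fiber, proj]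

lemma ncard_fiber_inl {n t : ℕ} (p : Fin n → Bool) :
    (fiber (Sum.inl p : Vert n t)).ncard = t * 2 := by
  have : fiber (Sum.inl p : Vert n t) = Set.range fun c => Sum.inl (p, c) := by
    ext (⟨q, c⟩ | w) <;> simp [fiber, proj, eq_comm]
  rw [this, ← Set.image_univ, Set.ncard_image_of_injective _ (fun _ _ h => by simpa using h)]
  simp [Set.ncard_univ]

lemma ncard_fiber_inr {n t : ℕ} (q : Fin t × Fin n) :
    (fiber (Sum.inr q : Vert n t)).ncard = 2 := by
  have : fiber (Sum.inr q : Vert n t) = Set.range fun d => Sum.inr (q, d) := by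
    ext (w | ⟨q', c⟩)
    · simp [fiber, proj]
    · cases c <;> simp [fiber, proj, eq_comm]
  rw [this, ← Set.image_univ, Set.ncard_image_of_injective _ (fun _ _ h => by simpa using h)]
  simp

lemma deg_inl {α β : Type} (a : α) :
    deg (completeBipartiteGraph α β) (Sum.inl a) = Nat.card β := by
  have : (completeBipartiteGraph α β).neighborSet (Sum.inl a) = Set.range Sum.inr := by
    ext (x | x) <;> simp
  rw [deg, this, ← Set.image_univ, Set.ncard_image_of_injective _ Sum.inr_injective,
    Set.ncard_univ]

lemma deg_inr {α β : Type} (b : β) :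
    deg (completeBipartiteGraph α β) (Sum.inr b) = Nat.card α := by
  have : (completeBipartiteGraph α β).neighborSet (Sum.inr b) = Set.range Sum.inl := by
    ext (x | x) <;> simp
  rw [deg, this, ← Set.image_univ, Set.ncard_image_of_injective _ Sum.inl_injective,
    Set.ncard_univ]

end CoverConstruction

open CoverConstruction

theorem stmt6 (k : ℕ) (hk : 2 ≤ k) (Δ : ℕ) (hΔ : Δ = 2 ^ (2 ^ k)) :
    ∃ (V W : Type) (_ : Fintype V) (_ : Fintype W)
      (G : SimpleGraph V) (H : SimpleGraph W)
      (AG BG : Set V) (AH BH : Set W) (L : V → Set W),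
      IsBipartiteCorrespondenceCover G H AG BG AH BH L ∧
      (∀ v : V, deg G v ≤ Δ) ∧ (∃ v : V, deg G v = Δ) ∧
      (∀ v ∈ AG, ((L v).ncard : ℝ) = (Δ : ℝ) / (Real.log Δ / Real.log 4)) ∧
      (∀ w ∈ BG, (L w).ncard = 2) ∧
      ¬ HasIndepTransversal H L := by
  subst hΔ
  have hkn : k ≤ 2 ^ k := Nat.lt_two_pow_self.le
  have htn : 2 ^ (2 ^ k - k) * 2 ^ k = 2 ^ 2 ^ k := by rw [← pow_add, Nat.sub_add_cancel hkn]
  have hlt : 2 ^ (2 ^ k - k) * 2 < 2 ^ 2 ^ k := by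
    rw [← htn]
    gcongr
    calc 2 < 2 ^ 2 := by norm_num
      _ ≤ 2 ^ k := Nat.pow_le_pow_right (by norm_num) hk
  refine ⟨Vert (2 ^ k) (2 ^ (2 ^ k - k)), CVert (2 ^ k) (2 ^ (2 ^ k - k)), inferInstance,
    inferInstance, completeBipartiteGraph _ _, coverGraph _ _, Set.range Sum.inl,
    Set.range Sum.inr, Set.range Sum.inl, Set.range Sum.inr, fiber, isBipartiteCover _ _,
    ?_, ⟨Sum.inl fun _ => false, ?_⟩, ?_, ?_, no_transversal hlt⟩
  · rintro (p | q)
    · simp [deg_inl, htn]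
    · simp [deg_inr]
  · simp [deg_inl, htn]
  · rintro _ ⟨p, rfl⟩
    rw [ncard_fiber_inl]
    have hl4 : Real.log 4 = 2 * Real.log 2 := by
      rw [show (4 : ℝ) = 2 ^ 2 by norm_num, Real.log_pow]
      norm_num
    have hl2 : Real.log 2 ≠ 0 := (Real.log_pos one_lt_two).ne'
    have htnR : (2 : ℝ) ^ (2 ^ k - k) * 2 ^ k = 2 ^ 2 ^ k := by exact_mod_cast htn
    push_cast
    rw [Real.log_pow, hl4, ← htnR]
    push_cast
    field_simp
  · rintro _ ⟨q, rfl⟩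
    exact ncard_fiber_inr q
end

section
/- Let $k \ge 2$ be an integer. Let $G$ and $H$ be finite bipartite graphs with bipartitions $(A_G,B_G)$ and $(A_H,B_H)$ respectively, such that $H$ is a bipartite correspondence-cover of $G$ with respect to a map $L$. If every vertex of $A_H$ has degree at most $1$ in $H$, every vertex of $B_H$ has degree at most $k^{k-2}/e$ in $H$, and $|L(v)| \ge k$ for all $v \in V(G)$, then $H$ admits an independent transversal with respect to $L$. -/
/-!
Shrink every list to exactly `k` elements and pick, uniformly and independently, one vertex of `H`
from each list. A part `a ∈ AG` is *bad* if each vertex of its list is adjacent to some picked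
vertex; if no part is bad, the picks on `BG` extend greedily to an independent transversal.

Since vertices of `AH` have degree at most one and the cover is a matching between any two lists,
a bad event that can occur at all prescribes the picks on at least `k` distinct parts of `BG`, so
it has probability at most `k ^ (-k)`. It shares one of these parts with at most
`k * k * (k ^ (k - 2) / e) = k ^ k / e` bad events, itself included. Hence the symmetric
Lovász local lemma in its sharp form `e * p * (d + 1) ≤ 1` applies. The local lemma is proved in
counting form (`exists_avoiding`), the probability bound is `mul_card_prescribed_le`, and
`exists_good_choice` combines them.
-/

/-- The inequality behind the constant `e` in the symmetric local lemma. -/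
theorem exp_neg_one_le_pow {q : ℝ} (h1 : q < 1) (n : ℕ)
    (hn : ((n : ℝ) + 1) * q ≤ 1) : 1 ≤ Real.exp 1 * (1 - q) ^ n := by
  have hq : 0 < 1 - q := by linarith
  -- `1 / (1 - q) = 1 + q / (1 - q) ≤ exp (q / (1 - q))`
  have h2 : Real.exp (-(q / (1 - q))) ≤ 1 - q := by
    rw [Real.exp_neg]
    apply inv_le_of_inv_le₀ hq
    have h3 := Real.add_one_le_exp (q / (1 - q))
    have h4 : q / (1 - q) + 1 = (1 - q)⁻¹ := by field_simp; ring
    linarith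
  have h5 : Real.exp (-1) ≤ (1 - q) ^ n := by
    calc Real.exp (-1) ≤ Real.exp (n * (-(q / (1 - q)))) := by
          apply Real.exp_le_exp.mpr
          have : (n : ℝ) * (q / (1 - q)) ≤ 1 := by
            rw [← mul_div_assoc, div_le_one hq]; linarith
          linarith
      _ = Real.exp (-(q / (1 - q))) ^ n := Real.exp_nat_mul _ _
      _ ≤ (1 - q) ^ n := by gcongr
  calc (1 : ℝ) = Real.exp 1 * Real.exp (-1) := by rw [← Real.exp_add]; simp
    _ ≤ _ := by gcongr

section LocalLemma

open Finset Classical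

variable {Ω ι : Type*}

/-- The outcomes of the finite sample space `S` at which none of the events `E a`, `a ∈ T`,
occurs. -/
noncomputable def avoiding (S : Finset Ω) (E : ι → Ω → Prop) (T : Finset ι) : Finset Ω :=
  S.filter fun ω => ∀ a ∈ T, ¬ E a ω

theorem mem_avoiding {S : Finset Ω} {E : ι → Ω → Prop} {T : Finset ι} {ω : Ω} :
    ω ∈ avoiding S E T ↔ ω ∈ S ∧ ∀ a ∈ T, ¬ E a ω := by
  simp [avoiding]

theorem card_avoiding_insert (S : Finset Ω) (E : ι → Ω → Prop) (T : Finset ι) (a : ι) :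
    #((avoiding S E T).filter (E a)) + #(avoiding S E (insert a T)) = #(avoiding S E T) := by
  have h := card_filter_add_card_filter_not (s := avoiding S E T) (E a)
  have h2 : (avoiding S E T).filter (fun ω => ¬ E a ω) = avoiding S E (insert a T) := by
    ext ω
    simp only [avoiding, mem_filter, forall_mem_insert]
    tauto
  rw [h2] at h
  exact h

/-- If every further event has conditional probability at most `q`, then avoiding `U` on top of
`T` costs a factor of at most `1 - q` per event. -/
theorem card_avoiding_union {S : Finset Ω} {E : ι → Ω → Prop} {q : ℝ} (h1 : q < 1)
    (T U : Finset ι) (hTU : Disjoint T U)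
    (h : ∀ T', T' ⊆ T ∪ U → ∀ a ∈ U, a ∉ T' →
      (#((avoiding S E T').filter (E a)) : ℝ) ≤ q * #(avoiding S E T')) :
    (1 - q) ^ #U * #(avoiding S E T) ≤ (#(avoiding S E (T ∪ U)) : ℝ) := by
  induction U using Finset.induction_on with
  | empty => simp
  | insert u U hu ih =>
    rw [disjoint_insert_right] at hTU
    have ih' := ih hTU.2 (fun T' hT' a ha =>
      h T' (hT'.trans (union_subset_union_right (subset_insert _ _))) a (mem_insert_of_mem ha))
    have h3 := h (T ∪ U) (union_subset_union_right (subset_insert _ _)) u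
      (mem_insert_self _ _) (by simp [hTU.1, hu])
    have h4 : (#((avoiding S E (T ∪ U)).filter (E u)) : ℝ)
        + #(avoiding S E (insert u (T ∪ U))) = #(avoiding S E (T ∪ U)) := by
      exact_mod_cast card_avoiding_insert S E (T ∪ U) u
    rw [card_insert_of_notMem hu, union_insert, pow_succ]
    have h5 := mul_le_mul_of_nonneg_left ih' (sub_pos.mpr h1).le
    linarith

/-- **Symmetric Lovász local lemma**, counting form. Here `N a` is the closed dependency
neighbourhood of `a`, of size at most `1 / q`, and `q / e` bounds the probability of `E a`
conditional on avoiding any set of events outside `N a`. -/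
theorem exists_avoiding {S : Finset Ω} (hS : S.Nonempty) (I : Finset ι) (E : ι → Ω → Prop)
    (N : ι → Finset ι) {q : ℝ} (h0 : 0 < q) (h1 : q < 1)
    (hself : ∀ a ∈ I, a ∈ N a) (hcard : ∀ a ∈ I, (#(N a) : ℝ) * q ≤ 1)
    (hind : ∀ a ∈ I, ∀ T ⊆ I, Disjoint T (N a) →
      Real.exp 1 * #((avoiding S E T).filter (E a)) ≤ q * #(avoiding S E T)) :
    ∃ ω ∈ S, ∀ a ∈ I, ¬ E a ω := by
  have key : ∀ n : ℕ, ∀ T : Finset ι, #T = n → T ⊆ I → ∀ a ∈ I, a ∉ T →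
      (#((avoiding S E T).filter (E a)) : ℝ) ≤ q * #(avoiding S E T) := by
    intro n
    induction n using Nat.strong_induction_on with
    | _ n ih =>
      intro T hTn hTI a ha haT
      set T1 := T.filter (· ∈ N a) with hT1
      set T2 := T.filter (· ∉ N a) with hT2
      have hun : T2 ∪ T1 = T := by
        ext b; simp only [hT1, hT2, mem_union, mem_filter]; tauto
      have hdis : Disjoint T2 T1 := by
        rw [disjoint_left]; intro b; simp only [hT1, hT2, mem_filter]; tauto
      have hch : (1 - q) ^ #T1 * #(avoiding S E T2) ≤ (#(avoiding S E (T2 ∪ T1)) : ℝ) := by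
        apply card_avoiding_union h1 _ _ hdis
        intro T' hT' b hb hbT'
        rw [hun] at hT'
        have hbT : b ∈ T := (mem_filter.mp hb).1
        refine ih #T' ?_ T' rfl (hT'.trans hTI) b (hTI hbT) hbT'
        rw [← hTn]
        exact card_lt_card ⟨hT', fun h => hbT' (h hbT)⟩
      rw [hun] at hch
      have hT2ind := hind a ha T2 ((filter_subset _ _).trans hTI) (by
        rw [disjoint_left]; intro b hb; exact (mem_filter.mp hb).2)
      have hmono : (#((avoiding S E T).filter (E a)) : ℝ)
          ≤ #((avoiding S E T2).filter (E a)) := by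
        norm_cast
        apply card_le_card
        intro ω
        simp only [avoiding, mem_filter]
        rintro ⟨⟨h2, h3⟩, h4⟩
        exact ⟨⟨h2, fun b hb => h3 b (mem_filter.mp hb).1⟩, h4⟩
      -- `a` itself lies in `N a` but not in `T1`
      have hT1card : #T1 + 1 ≤ #(N a) := by
        have : T1 ⊂ N a := ⟨fun b hb => (mem_filter.mp hb).2,
          fun h => haT (mem_filter.mp (h (hself a ha))).1⟩
        exact card_lt_card this
      have hpow := exp_neg_one_le_pow h1 #T1 (by
        refine le_trans ?_ (hcard a ha)
        have : ((#T1 : ℝ) + 1) ≤ #(N a) := by exact_mod_cast hT1card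
        gcongr)
      have hexp := Real.exp_pos 1
      refine le_of_mul_le_mul_left ?_ hexp
      calc Real.exp 1 * (#((avoiding S E T).filter (E a)) : ℝ)
          ≤ Real.exp 1 * #((avoiding S E T2).filter (E a)) := by gcongr
        _ ≤ q * #(avoiding S E T2) := hT2ind
        _ = q * (1 * #(avoiding S E T2)) := by ring
        _ ≤ q * ((Real.exp 1 * (1 - q) ^ #T1) * #(avoiding S E T2)) := by gcongr
        _ = Real.exp 1 * (q * ((1 - q) ^ #T1 * #(avoiding S E T2))) := by ring
        _ ≤ Real.exp 1 * (q * #(avoiding S E T)) := by gcongr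
  have hfin := card_avoiding_union (S := S) (E := E) h1 ∅ I (disjoint_empty_left _)
    (fun T' hT' a ha haT' => key _ T' rfl (by simpa using hT') a ha haT')
  rw [empty_union] at hfin
  have hpos : 0 < (1 - q) ^ #I * (#(avoiding S E ∅) : ℝ) := by
    have : avoiding S E ∅ = S := by simp [avoiding]
    rw [this]
    have h2 : (0 : ℝ) < #S := by exact_mod_cast hS.card_pos
    have h3 : 0 < 1 - q := by linarith
    positivity
  have hne : 0 < #(avoiding S E I) := by exact_mod_cast hpos.trans_le hfin
  obtain ⟨ω, hω⟩ := card_pos.mp hne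
  exact ⟨ω, (mem_filter.mp hω).1, (mem_filter.mp hω).2⟩

end LocalLemma

section Choices

open Finset Classical

variable {V W : Type*} [Fintype V]

/-- Resampling the coordinates in `C` injects (prescribed choices in `X`) × (values on `C`) into
`Y`; so prescribing the values on `C` costs a factor `k ^ #C ≥ k ^ k`. -/
theorem mul_card_prescribed_le {k : ℕ} (hk : 1 ≤ k) (M : V → Finset W) (hM : ∀ v, #(M v) = k)
    (C : Finset V) (hC : k ≤ #C) (t : V → W) (X Y : Finset (V → W))
    (hX : X ⊆ Fintype.piFinset M) (hXt : ∀ f ∈ X, ∀ v ∈ C, f v = t v)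
    (hXY : ∀ f ∈ X, ∀ g ∈ Fintype.piFinset M, (∀ v, v ∉ C → g v = f v) → g ∈ Y) :
    k ^ k * #X ≤ #Y := by
  have hcardpi : #(C.pi fun v => M v) = k ^ #C := by
    rw [card_pi]; simp [hM]
  calc k ^ k * #X ≤ k ^ #C * #X := by gcongr
    _ = #((C.pi fun v => M v) ×ˢ X) := by rw [card_product, hcardpi]
    _ ≤ #Y := by
      apply card_le_card_of_injOn
        (fun z => fun v => if h : v ∈ C then z.1 v h else z.2 v)
      · rintro ⟨g, f⟩ hz
        simp only [coe_product, Set.mem_prod, mem_coe, mem_pi] at hz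
        refine hXY f hz.2 _ ?_ ?_
        · rw [Fintype.mem_piFinset]
          intro v
          by_cases h : v ∈ C
          · simpa [h] using hz.1 v h
          · simpa [h] using Fintype.mem_piFinset.mp (hX hz.2) v
        · intro v hv
          simp [hv]
      · rintro ⟨g, f⟩ hz ⟨g', f'⟩ hz' heq
        simp only [coe_product, Set.mem_prod, mem_coe] at hz hz'
        have h1 : ∀ v, (if h : v ∈ C then g v h else f v)
            = (if h : v ∈ C then g' v h else f' v) := fun v => congrFun heq v
        refine Prod.ext ?_ ?_
        · funext v h
          simpa [h] using h1 v
        · funext v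
          by_cases h : v ∈ C
          · exact (hXt f hz.2 v h).trans (hXt f' hz'.2 v h).symm
          · simpa [h] using h1 v

variable [Fintype W]

/-- There is a choice of one vertex per list such that every part of `AG` keeps a vertex not
adjacent to any chosen vertex. The map `π` sends a vertex of `H` to the part containing it, `M`
consists of lists of size exactly `k`, and `m` bounds the degrees on the side `BG`. -/
theorem exists_good_choice (k m : ℕ) (hk : 2 ≤ k)
    (hm : (m : ℝ) * Real.exp 1 ≤ (k : ℝ) ^ (k - 2))
    (H : SimpleGraph W) (AG BG : Set V) (π : W → V) (M : V → Finset W)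
    (hM : ∀ v, #(M v) = k) (hπ : ∀ v, ∀ w ∈ M v, π w = v)
    (hA : ∀ v ∈ AG, ∀ x ∈ M v, ∀ y y', H.Adj x y → H.Adj x y' → y = y')
    (hAB : ∀ v ∈ AG, ∀ x ∈ M v, ∀ y, H.Adj x y → π y ∈ BG)
    (hB : ∀ v ∈ BG, ∀ y ∈ M v, #(univ.filter (H.Adj y)) ≤ m)
    (hmatch : ∀ v ∈ AG, ∀ x ∈ M v, ∀ x' ∈ M v, ∀ y, H.Adj x y → H.Adj x' y → x = x') :
    ∃ f : V → W, (∀ v, f v ∈ M v) ∧ ∀ a ∈ AG, ∃ x ∈ M a, ∀ v, ¬ H.Adj x (f v) := by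
  set S : Finset (V → W) := Fintype.piFinset M with hSdef
  have hS : S.Nonempty := by
    rw [hSdef, Fintype.piFinset_nonempty]
    intro v
    rw [← card_pos, hM]; omega
  obtain ⟨E, hE⟩ : ∃ E : V → (V → W) → Prop,
      ∀ a f, E a f ↔ ∀ x ∈ M a, ∃ v, H.Adj x (f v) := ⟨_, fun _ _ => Iff.rfl⟩
  -- only the events that can occur matter
  set I : Finset V := univ.filter fun a => a ∈ AG ∧ ∃ f ∈ S, E a f with hI
  -- two events interact when neighbours of the two lists lie in a common part
  set N : V → Finset V := fun a => (M a).biUnion fun x =>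
    (univ.filter (H.Adj x)).biUnion fun y => (M (π y)).biUnion fun y' =>
      (univ.filter (H.Adj y')).image π with hN
  have memN : ∀ a a' x x' y y' v, x ∈ M a → H.Adj x y → π y = v → y' ∈ M v → H.Adj x' y' →
      x' ∈ M a' → a' ∈ N a := by
    intro a a' x x' y y' v hx hxy hy hy' hxy' hx'
    simp only [hN, mem_biUnion, mem_image, mem_filter, mem_univ, true_and]
    exact ⟨x, hx, y, hxy, y', hy ▸ hy', x', hxy'.symm, hπ _ _ hx'⟩
  have hkR : (0 : ℝ) < (k : ℝ) ^ k := by positivity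
  have hexp := Real.exp_pos 1
  obtain ⟨f, hfS, hf⟩ := exists_avoiding hS I E N (q := Real.exp 1 / (k : ℝ) ^ k)
    (by positivity) (by
      rw [div_lt_one hkR]
      calc Real.exp 1 < 2.7182818286 := Real.exp_one_lt_d9
        _ < 2 ^ 2 := by norm_num
        _ ≤ (k : ℝ) ^ 2 := by gcongr; exact_mod_cast hk
        _ ≤ (k : ℝ) ^ k := by
          apply pow_le_pow_right₀ _ hk
          exact_mod_cast (by omega : 1 ≤ k))
    (by
      intro a ha
      obtain ⟨-, f, hfS, hf⟩ := (mem_filter.mp ha).2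
      obtain ⟨x, hx⟩ : (M a).Nonempty := by rw [← card_pos, hM]; omega
      obtain ⟨v, hv⟩ := (hE a f).mp hf x hx
      have hfv := Fintype.mem_piFinset.mp hfS v
      exact memN a a x x _ _ v hx hv (hπ _ _ hfv) hfv hv hx)
    (by
      intro a ha
      obtain ⟨haA, -⟩ := (mem_filter.mp ha).2
      have hNle : #(N a) ≤ k * (1 * (k * m)) := by
        refine (card_biUnion_le_card_mul _ _ (1 * (k * m)) fun x hx => ?_).trans_eq (by rw [hM])
        refine (card_biUnion_le_card_mul _ _ (k * m) fun y hy => ?_).trans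
          (Nat.mul_le_mul_right _ ?_)
        · refine (card_biUnion_le_card_mul _ _ m fun y' hy' => ?_).trans_eq (by rw [hM])
          exact card_image_le.trans (hB _ (hAB a haA x hx y (mem_filter.mp hy).2) y' hy')
        · rw [card_le_one]
          intro y hy y' hy'
          exact hA a haA x hx y y' (mem_filter.mp hy).2 (mem_filter.mp hy').2
      have hNle' : (#(N a) : ℝ) ≤ k * (1 * (k * m)) := by exact_mod_cast hNle
      rw [← mul_div_assoc, div_le_one hkR]
      calc (#(N a) : ℝ) * Real.exp 1 ≤ k * (1 * (k * m)) * Real.exp 1 := by gcongr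
        _ = (k : ℝ) ^ 2 * (m * Real.exp 1) := by ring
        _ ≤ (k : ℝ) ^ 2 * (k : ℝ) ^ (k - 2) := by gcongr
        _ = (k : ℝ) ^ k := by rw [← pow_add]; congr 1; omega)
    (by
      intro a ha T hTI hT
      obtain ⟨haA, f₀, hf₀S, hf₀⟩ := (mem_filter.mp ha).2
      have hf₀M := Fintype.mem_piFinset.mp hf₀S
      -- the parts on which the event at `a` prescribes the choice, with values given by `f₀`
      set C : Finset V := univ.filter fun v => ∃ x ∈ M a, H.Adj x (f₀ v) with hC
      have hCk : k ≤ #C := by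
        have : Nonempty V := ⟨a⟩
        rw [hE] at hf₀
        choose! c hc using hf₀
        rw [← hM a]
        apply card_le_card_of_injOn c
        · intro x hx
          simp only [hC, coe_filter, mem_univ, true_and, Set.mem_ofPred_eq]
          exact ⟨x, hx, hc x hx⟩
        · intro x hx x' hx' heq
          exact hmatch a haA x hx x' hx' _ (hc x hx) (heq ▸ hc x' hx')
      have hcnt := mul_card_prescribed_le (by omega : 1 ≤ k) M hM C hCk f₀
        ((avoiding S E T).filter (E a)) (avoiding S E T)
        (by intro f hf; exact (mem_avoiding.mp (mem_filter.mp hf).1).1)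
        (by
          intro f hf v hv
          have hfM := Fintype.mem_piFinset.mp (mem_avoiding.mp (mem_filter.mp hf).1).1
          obtain ⟨x, hx, hxv⟩ := (mem_filter.mp hv).2
          obtain ⟨v', hv'⟩ := (hE a f).mp (mem_filter.mp hf).2 x hx
          have heq := hA a haA x hx _ _ hv' hxv
          have : v' = v := by
            rw [← hπ v' _ (hfM v'), heq, hπ v _ (hf₀M v)]
          rw [← this, heq, this])
        (by
          intro f hf g hg hgf
          obtain ⟨hfS, hfT⟩ := mem_avoiding.mp (mem_filter.mp hf).1
          refine mem_avoiding.mpr ⟨hg, fun a' ha' hga' => hfT a' ha' ((hE a' f).mpr fun x' hx' => ?_)⟩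
          obtain ⟨v, hv⟩ := (hE a' g).mp hga' x' hx'
          refine ⟨v, ?_⟩
          rwa [← hgf v]
          intro hvC
          obtain ⟨x, hx, hxv⟩ := (mem_filter.mp hvC).2
          exact disjoint_left.mp hT ha' (memN a a' x x' _ _ v hx hxv (hπ _ _ (hf₀M v))
            (Fintype.mem_piFinset.mp hg v) hv hx'))
      have hcnt' : (k : ℝ) ^ k * #((avoiding S E T).filter (E a)) ≤ #(avoiding S E T) := by
        exact_mod_cast hcnt
      rw [div_mul_eq_mul_div, le_div_iff₀ hkR]
      calc _ = Real.exp 1 * ((k : ℝ) ^ k * #((avoiding S E T).filter (E a))) := by ring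
        _ ≤ _ := by gcongr)
  refine ⟨f, Fintype.mem_piFinset.mp hfS, fun a ha => ?_⟩
  by_contra hcon
  push Not at hcon
  rw [← hE] at hcon
  exact hf a (mem_filter.mpr ⟨mem_univ _, ha, f, hfS, hcon⟩) hcon

end Choices

theorem stmt7 {V W : Type*} [Fintype V] [Fintype W] (k : ℕ) (hk : 2 ≤ k)
    (G : SimpleGraph V) (H : SimpleGraph W) (AG BG : Set V) (AH BH : Set W)
    (L : V → Set W)
    (hcover : IsBipartiteCorrespondenceCover G H AG BG AH BH L)
    (hdegA : ∀ x ∈ AH, deg H x ≤ 1)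
    (hdegB : ∀ x ∈ BH, (deg H x : ℝ) ≤ (k : ℝ) ^ (k - 2) / Real.exp 1)
    (hL : ∀ v : V, k ≤ (L v).ncard) :
    HasIndepTransversal H L := by
  classical
  obtain ⟨hG, hH, ⟨⟨hpart, hnon⟩, hmat⟩, hLA, hLB⟩ := hcover
  choose π hπ hπu using hpart
  have hπ' : ∀ v w, w ∈ L v → π w = v := fun v w hw => (hπu w v hw).symm
  have hGcases : ∀ v, v ∈ AG ∨ v ∈ BG := fun v => by
    have : v ∈ AG ∪ BG := hG.1 ▸ Set.mem_univ v
    exact this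
  have hHdis : ∀ x, x ∈ AH → x ∈ BH → False := fun x h1 h2 => Set.disjoint_left.mp hH.2.1 h1 h2
  have hadjAB : ∀ x y, x ∈ AH → H.Adj x y → y ∈ BH := by
    intro x y hx hxy
    rcases hH.2.2 hxy with h | h
    · exact h.2
    · exact (hHdis x hx h.1).elim
  have hGadj : ∀ x y, H.Adj x y → G.Adj (π x) (π y) := by
    intro x y hxy
    by_contra h
    exact hnon h x (hπ x) y (hπ y) hxy
  have hsub : ∀ v, ∃ s : Finset W, (s : Set W) ⊆ L v ∧ s.card = k := by
    intro v
    have h1 : k ≤ (L v).toFinset.card := by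
      rw [← Set.ncard_eq_toFinset_card']; exact hL v
    obtain ⟨s, hs, hsk⟩ := Finset.exists_subset_card_eq h1
    exact ⟨s, fun x hx => Set.mem_toFinset.mp (hs hx), hsk⟩
  choose M hML hMk using hsub
  have hdeg : ∀ x, (Finset.univ.filter (H.Adj x)).card = deg H x := by
    intro x
    rw [deg, Set.ncard_eq_toFinset_card']
    congr 1
    ext y
    simp
  obtain ⟨f, hfM, hf⟩ := exists_good_choice k ⌊(k : ℝ) ^ (k - 2) / Real.exp 1⌋₊ hk
    (by
      have := Nat.floor_le (by positivity : 0 ≤ (k : ℝ) ^ (k - 2) / Real.exp 1)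
      rwa [le_div_iff₀ (Real.exp_pos 1)] at this)
    H AG BG π M hMk (fun v w hw => hπ' v w (hML v hw))
    (by
      intro v hv x hx y y' hy hy'
      have h1 := hdegA x (hLA v hv (hML v hx))
      rw [← hdeg, Finset.card_le_one] at h1
      exact h1 y (by simpa using hy) y' (by simpa using hy'))
    (by
      intro v hv x hx y hxy
      rcases hGcases (π y) with h | h
      · exact (hHdis y (hLA _ h (hπ y)) (hadjAB x y (hLA v hv (hML v hx)) hxy)).elim
      · exact h)
    (by
      intro v hv y hy
      rw [hdeg]
      exact Nat.le_floor (hdegB y (hLB v hv (hML v hy))))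
    (by
      intro v hv x hx x' hx' y hxy hxy'
      have h1 := hGadj x y hxy
      rw [hπ' v x (hML v hx)] at h1
      exact hmat h1.symm y (hπ y) x (hML v hx) x' (hML v hx') hxy.symm hxy'.symm)
  have hf' : ∀ v, ∃ x, v ∈ AG → x ∈ M v ∧ ∀ v', ¬ H.Adj x (f v') := by
    intro v
    by_cases h : v ∈ AG
    · obtain ⟨x, hx⟩ := hf v h
      exact ⟨x, fun _ => hx⟩
    · exact ⟨f v, fun h' => (h h').elim⟩
  choose c hc using hf'
  set g : V → W := fun v => if v ∈ AG then c v else f v with hg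
  have hgL : ∀ v, g v ∈ L v := by
    intro v
    by_cases h : v ∈ AG
    · simpa [hg, h] using hML v (hc v h).1
    · simpa [hg, h] using hML v (hfM v)
  -- an edge inside the transversal would join some `c v` to some chosen `f v'`
  have hno : ∀ v v', g v ∈ AH → g v' ∈ BH → ¬ H.Adj (g v) (g v') := by
    intro v v' hv hv' hadj
    have h1 : v ∈ AG := (hGcases v).resolve_right fun h => hHdis _ hv (hLB v h (hgL v))
    have h2 : v' ∉ AG := fun h => hHdis _ (hLA v' h (hgL v')) hv'
    simp only [hg, h1, h2, if_true, if_false] at hadj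
    exact (hc v h1).2 v' hadj
  refine ⟨Set.range g, ?_, fun v => ⟨g v, ⟨hgL v, v, rfl⟩, ?_⟩⟩
  · rintro _ ⟨v, rfl⟩ _ ⟨v', rfl⟩ hadj
    rcases hH.2.2 hadj with h | h
    · exact hno v v' h.1 h.2 hadj
    · exact hno v' v h.2 h.1 hadj.symm
  · rintro _ ⟨hw, v', rfl⟩
    have : v' = v := by rw [← hπ' v' _ (hgL v'), hπ' v _ hw]
    rw [this]
end

section
/- For every integer $k \ge 2$ there exist finite bipartite graphs $G$ and $H$ with bipartitions $(A_G,B_G)$ and $(A_H,B_H)$ respectively, such that $H$ is a bipartite correspondence-cover of $G$ with respect to a map $L$, every vertex of $A_H$ has degree at most $1$ in $H$, every vertex of $B_H$ has degree at most $k^{k-1}$ in $H$, $|L(v)| = k$ for all $v \in V(G)$, and $H$ does not admit an independent transversal with respect to $L$. -/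
/-- The cover graph: `(f, i)` on the left is joined to `(j, c)` on the right iff `j = i` and
`c = f i`. -/
def coverGraph (k : ℕ) : SimpleGraph (((Fin k → Fin k) × Fin k) ⊕ (Fin k × Fin k)) where
  Adj
    | .inl p, .inr q => q = (p.2, p.1 p.2)
    | .inr q, .inl p => q = (p.2, p.1 p.2)
    | _, _ => False
  symm := ⟨by rintro (p | p) (q | q) h <;> exact h⟩
  loopless := ⟨by rintro (p | p) h <;> exact h⟩

/-- The list of a vertex: a vertex of the cover belongs to the list of its first coordinate. -/
def coverList (k : ℕ) (v : (Fin k → Fin k) ⊕ Fin k) :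
    Set (((Fin k → Fin k) × Fin k) ⊕ (Fin k × Fin k)) :=
  {w | Sum.map Prod.fst Prod.fst w = v}

lemma deg_coverGraph_inl (k : ℕ) (p : (Fin k → Fin k) × Fin k) :
    deg (coverGraph k) (.inl p) ≤ 1 := by
  have h : (coverGraph k).neighborSet (.inl p) ⊆ {.inr (p.2, p.1 p.2)} := by
    rintro (q | q) hq
    · exact hq.elim
    · exact congrArg Sum.inr hq
  simpa [deg] using Set.ncard_le_ncard h

/-- The neighbours `(f, j)` of `(j, c)` satisfy `f j = c`, so `f` is determined by its values off
`j`. -/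
lemma deg_coverGraph_inr (k : ℕ) (q : Fin k × Fin k) :
    deg (coverGraph k) (.inr q) ≤ k ^ (k - 1) := by
  obtain ⟨j, c⟩ := q
  let g : ((Fin k → Fin k) × Fin k) ⊕ (Fin k × Fin k) → ({i : Fin k // i ≠ j} → Fin k) :=
    Sum.elim (fun p i => p.1 i) (fun _ _ => c)
  have hinj : Set.InjOn g ((coverGraph k).neighborSet (.inr (j, c))) := by
    rintro (⟨f, i⟩ | p) hp (⟨f', i'⟩ | p') hp' hg
    · obtain ⟨rfl, rfl⟩ := Prod.mk.inj (show (j, c) = (i, f i) from hp)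
      obtain ⟨rfl, hc⟩ := Prod.mk.inj (show (j, f j) = (i', f' i') from hp')
      have : f = f' := by
        funext i
        by_cases hi : i = j
        · rw [hi, hc]
        · exact congrFun hg ⟨i, hi⟩
      rw [this]
    · exact hp'.elim
    · exact hp.elim
    · exact hp.elim
  have h := Set.ncard_le_ncard_of_injOn (t := Set.univ) g (fun _ _ => Set.mem_univ _) hinj
  simpa [deg, Set.ncard_univ, Nat.card_eq_fintype_card, Fintype.card_subtype_compl] using h

lemma ncard_coverList (k : ℕ) (v : (Fin k → Fin k) ⊕ Fin k) : (coverList k v).ncard = k := by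
  rcases v with f | j
  · have h : coverList k (.inl f) = Set.range fun i => .inl (f, i) := by
      ext (⟨f', i⟩ | ⟨j, c⟩) <;> simp [coverList, eq_comm]
    rw [h, Set.ncard_range_of_injective fun a b hab => by simpa using hab]
    simp
  · have h : coverList k (.inr j) = Set.range fun c => .inr (j, c) := by
      ext (⟨f', i⟩ | ⟨j, c⟩) <;> simp [coverList, eq_comm]
    rw [h, Set.ncard_range_of_injective fun a b hab => by simpa using hab]
    simp

lemma isBipartitionOf_sum {α β : Type*} (G : SimpleGraph (α ⊕ β))
    (hl : ∀ a a', ¬ G.Adj (.inl a) (.inl a')) (hr : ∀ b b', ¬ G.Adj (.inr b) (.inr b')) :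
    IsBipartitionOf G (Set.range Sum.inl) (Set.range Sum.inr) := by
  refine ⟨Set.range_inl_union_range_inr, Set.isCompl_range_inl_range_inr.disjoint, ?_⟩
  rintro (a | b) (a' | b') h
  · exact (hl _ _ h).elim
  · exact .inl ⟨⟨a, rfl⟩, ⟨b', rfl⟩⟩
  · exact .inr ⟨⟨b, rfl⟩, ⟨a', rfl⟩⟩
  · exact (hr _ _ h).elim

lemma isCorrespondenceCover_coverGraph (k : ℕ) :
    IsCorrespondenceCoverWrt (completeBipartiteGraph (Fin k → Fin k) (Fin k)) (coverGraph k)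
      (coverList k) := by
  refine ⟨⟨fun w => ⟨_, rfl, fun v hv => hv.symm⟩, ?_⟩, ?_⟩
  · rintro v v' hG (p | p) rfl (q | q) rfl h
    · exact h
    · simp at hG
    · simp at hG
    · exact h
  · rintro v v' - (p | p) - (q | q) hq (q' | q') hq' h h'
    · exact h.elim
    · exact h.elim
    · exact h'.elim
    · exact congrArg Sum.inr (Eq.trans h (Eq.symm h'))
    · have h1 : p = (q.2, q.1 q.2) := h
      have h2 : p = (q'.2, q'.1 q'.2) := h'
      have h3 : (Sum.inl q.1 : (Fin k → Fin k) ⊕ Fin k) = .inl q'.1 := Eq.trans hq (Eq.symm hq')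
      exact congrArg Sum.inl
        (Prod.ext (Sum.inl.inj h3) (Prod.mk.inj (h1.symm.trans h2)).1)
    · exact h'.elim
    · exact h.elim
    · exact h.elim

lemma not_hasIndepTransversal_coverGraph (k : ℕ) :
    ¬ HasIndepTransversal (coverGraph k) (coverList k) := by
  rintro ⟨T, hT, hL⟩
  have hB : ∀ j : Fin k, ∃ c : Fin k, Sum.inr (j, c) ∈ T := by
    intro j
    obtain ⟨w, ⟨hw, hwT⟩, -⟩ := hL (.inr j)
    rcases w with p | ⟨j', c⟩
    · exact absurd hw (by simp [coverList])
    · obtain rfl : j' = j := Sum.inr.inj hw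
      exact ⟨c, hwT⟩
  choose f hf using hB
  obtain ⟨w, ⟨hw, hwT⟩, -⟩ := hL (.inl f)
  rcases w with ⟨f', i⟩ | p
  · obtain rfl : f' = f := Sum.inl.inj hw
    exact hT _ hwT _ (hf i) (show (i, f' i) = (i, f' i) from rfl)
  · exact absurd hw (by simp [coverList])

theorem stmt8 (k : ℕ) (hk : 2 ≤ k) :
    ∃ (V W : Type) (_ : Fintype V) (_ : Fintype W)
      (G : SimpleGraph V) (H : SimpleGraph W)
      (AG BG : Set V) (AH BH : Set W) (L : V → Set W),
      IsBipartiteCorrespondenceCover G H AG BG AH BH L ∧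
      (∀ x ∈ AH, deg H x ≤ 1) ∧ (∀ x ∈ BH, deg H x ≤ k ^ (k - 1)) ∧
      (∀ v : V, (L v).ncard = k) ∧
      ¬ HasIndepTransversal H L := by
  refine ⟨_, _, inferInstance, inferInstance,
    completeBipartiteGraph (Fin k → Fin k) (Fin k), coverGraph k,
    Set.range Sum.inl, Set.range Sum.inr, Set.range Sum.inl, Set.range Sum.inr, coverList k,
    ⟨isBipartitionOf_sum _ (by simp) (by simp),
      isBipartitionOf_sum _ (fun _ _ h => h) (fun _ _ h => h),
      isCorrespondenceCover_coverGraph k, ?_, ?_⟩, ?_, ?_, ncard_coverList k,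
    not_hasIndepTransversal_coverGraph k⟩
  · rintro _ ⟨f, rfl⟩ (p | p) hp
    · exact ⟨p, rfl⟩
    · exact absurd hp (by simp [coverList])
  · rintro _ ⟨j, rfl⟩ (p | p) hp
    · exact absurd hp (by simp [coverList])
    · exact ⟨p, rfl⟩
  · rintro _ ⟨p, rfl⟩
    exact deg_coverGraph_inl k p
  · rintro _ ⟨q, rfl⟩
    exact deg_coverGraph_inr k q
end

section
/- Let $k \ge 2$ be an integer and let $G$ be the complete bipartite graph with parts $A$ and $B$, where $|B| = k$ and $|A| < k^k/k!$. Then the correspondence chromatic number of $G$ is at most $k$: every correspondence-cover $H$ of $G$ with respect to a map $L$ satisfying $|L(v)| \ge k$ for every vertex $v$ of $G$ admits an independent transversal with respect to $L$. -/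
/-- The counting step for a single vertex of `A`: `R i b j` says that the `i`-th element of its
part is matched to the `j`-th element over `b`. -/
lemma card_bad_le {B : Type*} [Fintype B] [DecidableEq B] {k : ℕ} (hB : Fintype.card B = k)
    (R : Fin k → B → Fin k → Prop)
    (hleft : ∀ i b j j', R i b j → R i b j' → j = j')
    (hright : ∀ i i' b j, R i b j → R i' b j → i = i')
    (S : Finset (B → Fin k)) (hS : ∀ f ∈ S, ∀ i, ∃ b, R i b (f b)) :
    S.card ≤ k.factorial := by
  classical
  have hσ : ∀ f : S, ∃ σ : Fin k ↪ B, ∀ i, R i (σ i) (f.1 (σ i)) := by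
    intro f
    choose σ hσ using hS f.1 f.2
    refine ⟨⟨σ, fun i i' h => ?_⟩, hσ⟩
    have h' := hσ i'
    rw [← h] at h'
    exact hright _ _ _ _ (hσ i) h'
  choose σ hσ using hσ
  have hinj : Function.Injective σ := by
    intro f f' h
    apply Subtype.ext
    funext b
    have hsurj : Function.Surjective (σ f) :=
      ((Fintype.bijective_iff_injective_and_card _).2 ⟨(σ f).injective, by simp [hB]⟩).2
    obtain ⟨i, rfl⟩ := hsurj b
    have h' := hσ f' i
    rw [← h] at h'
    exact hleft _ _ _ _ (hσ f i) h'
  have hcard := Fintype.card_le_of_injective σ hinj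
  simpa [Fintype.card_embedding_eq, hB, Nat.descFactorial_self] using hcard

theorem stmt11 {A B : Type*} [Fintype A] [Fintype B] (k : ℕ) (hk : 2 ≤ k)
    (hB : Fintype.card B = k)
    (hA : (Fintype.card A : ℝ) < (k : ℝ) ^ k / (Nat.factorial k : ℝ))
    {W : Type*} [Fintype W] (H : SimpleGraph W) (L : A ⊕ B → Set W)
    (hcover : IsCorrespondenceCoverWrt (completeBipartiteGraph A B) H L)
    (hL : ∀ v : A ⊕ B, k ≤ (L v).ncard) :
    HasIndepTransversal H L := by
  classical
  obtain ⟨⟨hpart, hnon⟩, hmatch⟩ := hcover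
  have he : ∀ v, ∃ e : Fin k → W, Function.Injective e ∧ ∀ i, e i ∈ L v := by
    intro v
    have hle : Fintype.card (Fin k) ≤ Fintype.card (L v) := by
      rw [Fintype.card_fin, ← Nat.card_eq_fintype_card, Nat.card_coe_set_eq]
      exact hL v
    obtain ⟨φ⟩ := Function.Embedding.nonempty_of_card_le hle
    exact ⟨fun i => φ i, Subtype.val_injective.comp φ.injective, fun i => (φ i).2⟩
  choose e heinj heL using he
  have hAB : ∀ (a : A) (b : B), (completeBipartiteGraph A B).Adj (.inl a) (.inr b) := by simp
  let bad : A → Finset (B → Fin k) := fun a =>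
    Finset.univ.filter fun f => ∀ i, ∃ b, H.Adj (e (.inl a) i) (e (.inr b) (f b))
  have hbad : ∀ a, (bad a).card ≤ k.factorial := by
    intro a
    refine card_bad_le hB (fun i b j => H.Adj (e (.inl a) i) (e (.inr b) j)) ?_ ?_ (bad a) ?_
    · intro i b j j' h h'
      exact heinj _ (hmatch (hAB a b) _ (heL _ i) _ (heL _ j) _ (heL _ j') h h')
    · intro i i' b j h h'
      exact heinj _ (hmatch (hAB a b).symm _ (heL _ j) _ (heL _ i) _ (heL _ i') h.symm h'.symm)
    · intro f hf
      exact (Finset.mem_filter.1 hf).2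
  have hlt : (Finset.univ.biUnion bad).card < Fintype.card (B → Fin k) := by
    have hA' : Fintype.card A * k.factorial < k ^ k := by
      rw [lt_div_iff₀ (by positivity)] at hA
      exact_mod_cast hA
    calc (Finset.univ.biUnion bad).card ≤ Fintype.card A * k.factorial :=
          Finset.card_biUnion_le_card_mul _ _ _ fun a _ => hbad a
      _ < k ^ k := hA'
      _ = Fintype.card (B → Fin k) := by simp [hB]
  obtain ⟨f, hf⟩ : ∃ f, f ∉ Finset.univ.biUnion bad := by
    by_contra! h
    rw [Finset.eq_univ_iff_forall.2 h, Finset.card_univ] at hlt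
    exact lt_irrefl _ hlt
  have hgood : ∀ a, ∃ i, ∀ b, ¬ H.Adj (e (.inl a) i) (e (.inr b) (f b)) := by
    simpa [bad] using hf
  choose g hg using hgood
  let c : A ⊕ B → Fin k := Sum.elim g f
  refine ⟨Set.range fun v => e v (c v), ?_, fun v => ?_⟩
  · rintro _ ⟨v, rfl⟩ _ ⟨v', rfl⟩
    by_cases hadj : (completeBipartiteGraph A B).Adj v v'
    · rcases v with a | b <;> rcases v' with a' | b'
      · simp at hadj
      · exact hg a b'
      · exact fun h => hg a' b h.symm
      · simp at hadj
    · exact hnon hadj _ (heL _ _) _ (heL _ _)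
  · refine ⟨e v (c v), ⟨heL _ _, v, rfl⟩, ?_⟩
    rintro _ ⟨hw, v', rfl⟩
    obtain rfl : v' = v := (hpart _).unique (heL _ _) hw
    rfl
end

section
/- Let $k \ge 2$ be an integer and let $G$ be the complete bipartite graph with parts $A$ and $B$, where $|B| = k$ and $|A| \ge (k^{k+1}/k!) \log k$ (natural logarithm). Then the correspondence chromatic number of $G$ exceeds $k$: there exists a correspondence-cover $H$ of $G$ with respect to a map $L$ satisfying $|L(v)| = k$ for every vertex $v$ of $G$ such that $H$ admits no independent transversal with respect to $L$. -/
/-- For fixed `f`, exactly `k!` shift vectors `c` make `f + c` a bijection, by the substitution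
`g = f + c`. -/
lemma card_shift_not_bijective (k : ℕ) [NeZero k] (f : Fin k → Fin k) :
    (Finset.univ.filter fun c : Fin k → Fin k => ¬ Function.Bijective (f + c)).card
      = k ^ k - Nat.factorial k := by
  classical
  have h1 : (Finset.univ.filter fun c : Fin k → Fin k => Function.Bijective (f + c)).card
      = Nat.factorial k := by
    rw [← Fintype.card_subtype]
    have e1 : {c : Fin k → Fin k // Function.Bijective (f + c)} ≃
        {g : Fin k → Fin k // Function.Bijective g} :=
      (Equiv.addLeft f).subtypeEquiv (fun c => Iff.rfl)
    let e2 : {g : Fin k → Fin k // Function.Bijective g} ≃ Equiv.Perm (Fin k) :=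
      { toFun := fun g => Equiv.ofBijective g.1 g.2
        invFun := fun σ => ⟨σ, σ.bijective⟩
        left_inv := fun _ => rfl
        right_inv := fun _ => Equiv.ext fun _ => rfl }
    rw [Fintype.card_congr (e1.trans e2), Fintype.card_perm, Fintype.card_fin]
  have h2 := Finset.card_filter_add_card_filter_not (s := Finset.univ)
    (fun c : Fin k → Fin k => Function.Bijective (f + c))
  rw [h1, Finset.card_univ, Fintype.card_fun, Fintype.card_fin] at h2
  omega

/-- The union bound: when it is strict, some family of shifts blocks every `f`. -/
lemma exists_shifts (k n : ℕ) [NeZero k]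
    (h : k ^ k * (k ^ k - Nat.factorial k) ^ n < (k ^ k) ^ n) :
    ∃ C : Fin n → Fin k → Fin k, ∀ f : Fin k → Fin k, ∃ a, Function.Bijective (f + C a) := by
  classical
  by_contra! hC
  have hcover : (Finset.univ : Finset (Fin n → Fin k → Fin k)) ⊆
      (Finset.univ : Finset (Fin k → Fin k)).biUnion fun f => Fintype.piFinset fun _ : Fin n =>
        Finset.univ.filter fun c : Fin k → Fin k => ¬ Function.Bijective (f + c) := by
    intro C _
    obtain ⟨f, hf⟩ := hC C
    exact Finset.mem_biUnion.mpr ⟨f, Finset.mem_univ _, Fintype.mem_piFinset.mpr fun a =>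
      Finset.mem_filter.mpr ⟨Finset.mem_univ _, hf a⟩⟩
  have h1 := (Finset.card_le_card hcover).trans Finset.card_biUnion_le
  simp only [Fintype.card_piFinset, card_shift_not_bijective, Finset.card_univ, Finset.sum_const,
    Finset.prod_const, Fintype.card_fun, Fintype.card_fin, smul_eq_mul] at h1
  omega

lemma union_bound_lt (k n : ℕ) (hk : 2 ≤ k)
    (hA : (k : ℝ) ^ (k + 1) / (Nat.factorial k : ℝ) * Real.log k ≤ (n : ℝ)) :
    k ^ k * (k ^ k - Nat.factorial k) ^ n < (k ^ k) ^ n := by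
  have hk0 : (0 : ℝ) < k := by positivity
  have hlog : 0 < Real.log k := Real.log_pos (by exact_mod_cast hk)
  have hfac : (0 : ℝ) < Nat.factorial k := by exact_mod_cast Nat.factorial_pos k
  have hn : (0 : ℝ) < n := lt_of_lt_of_le (by positivity) hA
  have hn' : n ≠ 0 := by rintro rfl; simp at hn
  have hle : Nat.factorial k ≤ k ^ k := Nat.factorial_le_pow k
  have hK : (0 : ℝ) < (k : ℝ) ^ k := by positivity
  set p : ℝ := Nat.factorial k / (k : ℝ) ^ k with hp
  have hp0 : 0 < p := by positivity
  have hp1 : p ≤ 1 := by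
    rw [hp, div_le_one hK]; exact_mod_cast hle
  have hsub : (k : ℝ) ^ k - Nat.factorial k = (k : ℝ) ^ k * (1 - p) := by
    rw [hp]; field_simp
  have hpn : k * Real.log k ≤ n * p := by
    have h := mul_le_mul_of_nonneg_right hA hp0.le
    calc k * Real.log k = (k : ℝ) ^ (k + 1) / (Nat.factorial k : ℝ) * Real.log k * p := by
          rw [hp, pow_succ]; field_simp
      _ ≤ _ := h
  have hexp : (1 - p) ^ n < Real.exp (-(n * p)) := by
    have h := Real.add_one_lt_exp (x := -p) (by linarith)
    calc (1 - p) ^ n < Real.exp (-p) ^ n :=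
          pow_lt_pow_left₀ (by linarith) (by linarith) hn'
      _ = _ := by rw [← Real.exp_nat_mul]; ring_nf
  have hlt : (k : ℝ) ^ k * (1 - p) ^ n < 1 := by
    have hkexp : (k : ℝ) ^ k = Real.exp (k * Real.log k) := by
      rw [Real.exp_nat_mul, Real.exp_log hk0]
    calc (k : ℝ) ^ k * (1 - p) ^ n < (k : ℝ) ^ k * Real.exp (-(n * p)) := by gcongr
      _ = Real.exp (k * Real.log k - n * p) := by
          rw [hkexp, ← Real.exp_add]; ring_nf
      _ ≤ 1 := Real.exp_le_one_iff.mpr (by linarith)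
  have key : (k : ℝ) ^ k * ((k : ℝ) ^ k - Nat.factorial k) ^ n < ((k : ℝ) ^ k) ^ n := by
    rw [hsub, mul_pow]
    have := mul_lt_mul_of_pos_right hlt (pow_pos hK n)
    linarith
  have hcast : (((k ^ k * (k ^ k - Nat.factorial k) ^ n : ℕ)) : ℝ) < (((k ^ k) ^ n : ℕ) : ℝ) := by
    push_cast [Nat.cast_sub hle]
    exact key
  exact_mod_cast hcast

/-- The cover of `K_{n,k}` in which colour `j` at `b` is matched to colour `j + C a b` at `a`. -/
def shiftCover {n k : ℕ} (C : Fin n → Fin k → Fin k) :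
    SimpleGraph ((Fin n ⊕ Fin k) × Fin k) where
  Adj x y := match x, y with
    | (.inl a, i), (.inr b, j) => i = j + C a b
    | (.inr b, j), (.inl a, i) => i = j + C a b
    | _, _ => False
  symm := ⟨by rintro ⟨a | b, i⟩ ⟨a' | b', j⟩ h <;> simp_all⟩
  loopless := ⟨by rintro ⟨a | b, i⟩ h <;> simp at h⟩

theorem stmt12 {A B : Type*} [Fintype A] [Fintype B] (k : ℕ) (hk : 2 ≤ k)
    (hB : Fintype.card B = k)
    (hA : (k : ℝ) ^ (k + 1) / (Nat.factorial k : ℝ) * Real.log k ≤ (Fintype.card A : ℝ)) :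
    ∃ (W : Type) (_ : Fintype W) (H : SimpleGraph W) (L : A ⊕ B → Set W),
      IsCorrespondenceCoverWrt (completeBipartiteGraph A B) H L ∧
      (∀ v : A ⊕ B, (L v).ncard = k) ∧
      ¬ HasIndepTransversal H L := by
  classical
  have : NeZero k := ⟨by omega⟩
  obtain ⟨C, hC⟩ := exists_shifts k (Fintype.card A) (union_bound_lt k _ hk hA)
  -- Indexing the vertices by `Fin` keeps the cover in `Type`, whatever the universes of `A`, `B`.
  let eA : A ≃ Fin (Fintype.card A) := Fintype.equivFin A
  let eB : B ≃ Fin k := Fintype.equivFinOfCardEq hB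
  let e : A ⊕ B ≃ Fin (Fintype.card A) ⊕ Fin k := Equiv.sumCongr eA eB
  refine ⟨(Fin (Fintype.card A) ⊕ Fin k) × Fin k, inferInstance, shiftCover C,
    fun v => {w | w.1 = e v}, ⟨⟨?_, ?_⟩, ?_⟩, ?_, ?_⟩
  · intro w
    exact ⟨e.symm w.1, by simp, fun v hv => by simp [Set.mem_ofPred_eq.mp hv]⟩
  · rintro (a | b) (a' | b') hadj ⟨x, i⟩ hx ⟨y, j⟩ hy h <;>
      simp only [Set.mem_ofPred_eq] at hx hy <;> subst hx hy <;>
      simp [e, shiftCover] at hadj h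
  · rintro (a | b) (a' | b') hadj ⟨x, i⟩ hx ⟨y, j⟩ hy ⟨z, l⟩ hz h h' <;>
      simp only [Set.mem_ofPred_eq] at hx hy hz <;> subst hx hy hz <;>
      simp [e, shiftCover] at hadj h h'
    · simpa [e] using h.symm.trans h'
    · simp [h, h']
  · intro v
    have : {w : (Fin (Fintype.card A) ⊕ Fin k) × Fin k | w.1 = e v}
        = (fun i => (e v, i)) '' Set.univ := by
      ext ⟨x, i⟩
      simp [eq_comm]
    beta_reduce
    rw [this, Set.ncard_image_of_injective _ (Prod.mk_right_injective _), Set.ncard_univ,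
      Nat.card_fin]
  · rintro ⟨T, hT, hL⟩
    have hcol : ∀ b : Fin k, ∃ j : Fin k, ((Sum.inr b, j) : (Fin _ ⊕ Fin k) × Fin k) ∈ T := by
      intro b
      obtain ⟨⟨x, j⟩, ⟨hx, hxT⟩, -⟩ := hL (Sum.inr (eB.symm b))
      simp only [Set.mem_ofPred_eq] at hx
      subst hx
      exact ⟨j, by simpa [e] using hxT⟩
    choose f hf using hcol
    obtain ⟨a, ha⟩ := hC f
    obtain ⟨⟨x, i⟩, ⟨hx, hxT⟩, -⟩ := hL (Sum.inl (eA.symm a))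
    simp only [Set.mem_ofPred_eq] at hx
    subst hx
    obtain ⟨b, hb⟩ := ha.2 i
    refine hT _ hxT _ (hf b) ?_
    simp [e, shiftCover, ← hb]
end

section
/- There are infinitely many positive integers $D$ for which the following holds: there exist finite bipartite graphs $G$ and $H$ with bipartitions $(A_G,B_G)$ and $(A_H,B_H)$ respectively, such that $H$ is a bipartite correspondence-cover of $G$ with respect to a map $L$, the maximum degree of $H$ is at most $D$, $|L(v)| = D - 2$ for all $v \in A_G$, $|L(w)| = 2$ for all $w \in B_G$, and $H$ does not admit an independent transversal with respect to $L$. -/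
/-- A map from a `2m`-element set to an `m`-element set has at least `4m` ordered collisions.
This is Cauchy–Schwarz, in the form `k² ≥ 4k - 4` summed over the fibre sizes `k`. -/
lemma collisions_lower {F Q : Type} [Fintype F] [Fintype Q] [DecidableEq Q] (g : F → Q)
    (hc : Fintype.card F = 2 * Fintype.card Q) :
    2 * Fintype.card F ≤ ∑ x : F, ∑ x' : F, if g x = g x' then 1 else 0 := by
  classical
  have hsum : ∑ r : Q, (Finset.univ.filter (fun x => g x = r)).card = Fintype.card F :=
    (Finset.card_eq_sum_card_fiberwise (f := g) (s := Finset.univ) (t := Finset.univ)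
      (fun x _ => by simp)).symm
  have hcol : ∑ x : F, ∑ x' : F, (if g x = g x' then 1 else 0)
      = ∑ r : Q, (Finset.univ.filter (fun x => g x = r)).card ^ 2 := by
    have h1 : ∀ x : F, ∑ x' : F, (if g x = g x' then 1 else 0)
        = (Finset.univ.filter (fun x' => g x' = g x)).card := by
      intro x
      rw [Finset.card_filter]
      exact Finset.sum_congr rfl fun x' _ => by simp only [eq_comm]
    simp only [h1]
    rw [← Finset.sum_fiberwise (s := Finset.univ) (g := g)]
    refine Finset.sum_congr rfl fun r _ => ?_
    rw [Finset.sum_congr rfl (g := fun _ => (Finset.univ.filter (fun x => g x = r)).card)]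
    · simp [sq]
    · intro x hx
      rw [(Finset.mem_filter.1 hx).2]
  rw [hcol]
  have h4 : ∑ r : Q, 4 * (Finset.univ.filter (fun x => g x = r)).card
      ≤ ∑ r : Q, ((Finset.univ.filter (fun x => g x = r)).card ^ 2 + 4) := by
    refine Finset.sum_le_sum fun r _ => ?_
    generalize (Finset.univ.filter (fun x => g x = r)).card = k
    zify
    nlinarith [sq_nonneg ((k : ℤ) - 2)]
  rw [← Finset.mul_sum, hsum, Finset.sum_add_distrib] at h4
  simp only [Finset.sum_const, Finset.card_univ, smul_eq_mul] at h4
  omega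

/-- Distinct points of the graph of `c` are joined by a line of at most one slope, so they account for
at most `q (q - 1)` collisions of the functions `x ↦ c x - a x`. -/
lemma collisions_upper {F : Type} [Field F] [Fintype F] [DecidableEq F] (c : F → F) :
    ∑ a : F, ∑ x : F, ∑ x' : F, (if c x - a * x = c x' - a * x' then 1 else 0)
      < 2 * Fintype.card F ^ 2 := by
  rw [Finset.sum_comm]
  have hx : ∀ x : F, ∑ a : F, ∑ x' : F, (if c x - a * x = c x' - a * x' then 1 else 0)
      < 2 * Fintype.card F := by
    intro x
    rw [Finset.sum_comm, ← Finset.add_sum_erase _ _ (Finset.mem_univ x)]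
    have hoff : ∀ x' ∈ Finset.univ.erase x,
        ∑ a : F, (if c x - a * x = c x' - a * x' then 1 else 0) ≤ 1 := by
      intro x' hx'
      rw [← Finset.card_filter, Finset.card_le_one]
      intro a ha b hb
      have ha := (Finset.mem_filter.1 ha).2
      have hb := (Finset.mem_filter.1 hb).2
      have hne : x - x' ≠ 0 := sub_ne_zero.2 (Finset.ne_of_mem_erase hx').symm
      apply mul_right_cancel₀ hne
      linear_combination hb - ha
    have h := Finset.sum_le_card_nsmul _ _ _ hoff
    rw [Finset.card_erase_of_mem (Finset.mem_univ x), Finset.card_univ] at h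
    have hpos : 0 < Fintype.card F := Fintype.card_pos
    simp only [if_true, Finset.sum_const, Finset.card_univ, smul_eq_mul, mul_one] at h ⊢
    omega
  calc _ < ∑ _x : F, 2 * Fintype.card F :=
        Finset.sum_lt_sum_of_nonempty Finset.univ_nonempty fun x _ => hx x
    _ = _ := by simp [sq]; ring

/-- For every `c` some pair of parallel lines (of slope `a`) is such that both lines meet the graph
of `c`. -/
lemma exists_blocked {F Q : Type} [Field F] [Fintype F] [Fintype Q]
    (p : F → Q) (hc : Fintype.card F = 2 * Fintype.card Q) (c : F → F) :
    ∃ a x x' : F, c x - a * x ≠ c x' - a * x' ∧ p (c x - a * x) = p (c x' - a * x') := by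
  classical
  by_contra! hcon
  have h1 : ∀ a : F, 2 * Fintype.card F ≤
      ∑ x : F, ∑ x' : F, (if c x - a * x = c x' - a * x' then 1 else 0) := by
    intro a
    refine (collisions_lower (fun x => p (c x - a * x)) hc).trans (le_of_eq ?_)
    refine Finset.sum_congr rfl fun x _ => Finset.sum_congr rfl fun x' _ => ?_
    refine if_congr ⟨fun h => ?_, fun h => by rw [h]⟩ rfl rfl
    by_contra hne
    exact hcon a x x' hne h
  have h2 := Finset.sum_le_sum fun a (_ : a ∈ Finset.univ) => h1 a
  have h3 := collisions_upper c
  simp only [Finset.sum_const, Finset.card_univ, smul_eq_mul] at h2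
  nlinarith

/-- The point–line incidence graph: `inl (x, y)` is a point, `inr (a, b)` is the line `y = a x + b`. -/
def incGraph (F : Type) [Field F] : SimpleGraph ((F × F) ⊕ (F × F)) where
  Adj
    | .inl P, .inr l => P.2 = l.1 * P.1 + l.2
    | .inr l, .inl P => P.2 = l.1 * P.1 + l.2
    | _, _ => False
  symm := ⟨by rintro (P | l) (P' | l') h <;> exact h⟩
  loopless := ⟨by rintro (P | l) h <;> exact h⟩

/-- The part containing a vertex: the abscissa of a point; the slope of a line together with
the class of its intercept. -/
def partOf {F Q : Type} (p : F → Q) : (F × F) ⊕ (F × F) → F ⊕ (F × Q)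
  | .inl P => .inl P.1
  | .inr l => .inr (l.1, p l.2)

lemma deg_incGraph_le {F : Type} [Field F] [Fintype F] (w : (F × F) ⊕ (F × F)) :
    deg (incGraph F) w ≤ Fintype.card F := by
  rw [← Nat.card_eq_fintype_card, ← Set.ncard_univ]
  rcases w with ⟨x, y⟩ | ⟨a, b⟩
  · -- the lines through a point are determined by their slope
    refine (Set.ncard_le_ncard (t := (fun a => Sum.inr (a, y - a * x)) '' Set.univ) ?_
      (Set.toFinite _)).trans (Set.ncard_image_le (Set.toFinite _))
    rintro (P | ⟨a, b⟩) h
    · exact h.elim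
    · have h : y = a * x + b := h
      exact ⟨a, trivial, by simp [h]⟩
  · refine (Set.ncard_le_ncard (t := (fun x => Sum.inl (x, a * x + b)) '' Set.univ) ?_
      (Set.toFinite _)).trans (Set.ncard_image_le (Set.toFinite _))
    rintro (⟨x, y⟩ | l) h
    · have h : y = a * x + b := h
      exact ⟨x, trivial, by simp [h]⟩
    · exact h.elim

lemma isCover_incGraph {F Q : Type} [Field F] (p : F → Q) :
    IsBipartiteCorrespondenceCover (completeBipartiteGraph F (F × Q)) (incGraph F)
      (Set.range Sum.inl) (Set.range Sum.inr) (Set.range Sum.inl) (Set.range Sum.inr)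
      (fun v => partOf p ⁻¹' {v}) := by
  refine ⟨⟨Set.range_inl_union_range_inr, Set.isCompl_range_inl_range_inr.disjoint, ?_⟩,
    ⟨Set.range_inl_union_range_inr, Set.isCompl_range_inl_range_inr.disjoint, ?_⟩,
    ⟨⟨?_, ?_⟩, ?_⟩, ?_, ?_⟩
  · rintro (u | u) (v | v) h <;> simp_all [completeBipartiteGraph]
  · rintro (u | u) (v | v) h
    · exact h.elim
    · exact Or.inl ⟨⟨u, rfl⟩, ⟨v, rfl⟩⟩
    · exact Or.inr ⟨⟨u, rfl⟩, ⟨v, rfl⟩⟩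
    · exact h.elim
  · intro w
    exact ⟨partOf p w, rfl, fun v hv => Eq.symm hv⟩
  · rintro v v' hn x rfl y rfl h
    rcases x with x | x <;> rcases y with y | y
    · exact h
    · exact hn (by simp [partOf, completeBipartiteGraph])
    · exact hn (by simp [partOf, completeBipartiteGraph])
    · exact h
  · rintro v v' - x rfl y rfl y' hy' h h'
    rcases x with ⟨x, z⟩ | ⟨x, z⟩ <;> rcases y with ⟨y, t⟩ | ⟨y, t⟩ <;>
      rcases y' with ⟨y', t'⟩ | ⟨y', t'⟩ <;>
      first
        | exact h.elim
        | exact h'.elim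
        | skip
    · have h : z = y * x + t := h
      have h' : z = y' * x + t' := h'
      simp only [partOf, Set.mem_preimage, Set.mem_singleton_iff, Sum.inr.injEq,
        Prod.mk.injEq] at hy'
      obtain ⟨rfl, -⟩ := hy'
      have : t = t' := by linear_combination h' - h
      rw [this]
    · have h : t = x * y + z := h
      have h' : t' = x * y' + z := h'
      simp only [partOf, Set.mem_preimage, Set.mem_singleton_iff, Sum.inl.injEq] at hy'
      rw [h, h', hy']
  · rintro _ ⟨v, rfl⟩ (w | w) hw
    · exact ⟨w, rfl⟩
    · simp [partOf] at hw
  · rintro _ ⟨v, rfl⟩ (w | w) hw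
    · simp [partOf] at hw
    · exact ⟨w, rfl⟩

lemma ncard_partOf_inl {F Q : Type} [Fintype F] (p : F → Q) (x : F) :
    (partOf p ⁻¹' {Sum.inl x}).ncard = Fintype.card F := by
  have : partOf p ⁻¹' {Sum.inl x} = (fun y => Sum.inl (x, y)) '' Set.univ := by
    ext (⟨x', y⟩ | l)
    · simp [partOf, eq_comm]
    · simp [partOf]
  rw [this, Set.ncard_image_of_injective _ (fun y y' h => by simpa using h), Set.ncard_univ,
    Nat.card_eq_fintype_card]

lemma ncard_partOf_inr {F Q : Type} (p : F → Q) (a : F) (r : Q) :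
    (partOf p ⁻¹' {Sum.inr (a, r)}).ncard = (p ⁻¹' {r}).ncard := by
  have : partOf p ⁻¹' {Sum.inr (a, r)} = (fun b => Sum.inr (a, b)) '' (p ⁻¹' {r}) := by
    ext (P | ⟨a', b⟩)
    · simp [partOf]
    · simp [partOf]
      grind
  rw [this, Set.ncard_image_of_injective _ (fun y y' h => by simpa using h)]

lemma not_hasIndepTransversal {F Q : Type} [Field F] [Fintype F] [Fintype Q] (p : F → Q)
    (hp : ∀ r, (p ⁻¹' {r}).ncard = 2) (hc : Fintype.card F = 2 * Fintype.card Q) :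
    ¬ HasIndepTransversal (incGraph F) (fun v => partOf p ⁻¹' {v}) := by
  rintro ⟨T, hT, hex⟩
  have hpt : ∀ x : F, ∃ y : F, Sum.inl (x, y) ∈ T := by
    intro x
    obtain ⟨⟨x', y⟩ | l, ⟨hw, hwT⟩, -⟩ := hex (Sum.inl x)
    · simp only [partOf, Set.mem_preimage, Set.mem_singleton_iff, Sum.inl.injEq] at hw
      exact ⟨y, hw ▸ hwT⟩
    · simp [partOf] at hw
  choose c hcT using hpt
  obtain ⟨a, x, x', hne, heq⟩ := exists_blocked p hc c
  obtain ⟨P | ⟨a', b⟩, ⟨hw, hwT⟩, -⟩ := hex (Sum.inr (a, p (c x - a * x)))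
  · simp [partOf] at hw
  simp only [partOf, Set.mem_preimage, Set.mem_singleton_iff, Sum.inr.injEq,
    Prod.mk.injEq] at hw
  obtain ⟨rfl, hb⟩ := hw
  -- the selected line misses the graph of `c`, so its intercept is a third element of the pair
  have hbx : ∀ z, b ≠ c z - a' * z := fun z hz =>
    hT _ (hcT z) _ hwT (show c z = a' * z + b by rw [hz]; ring)
  have h3 : ({b, c x - a' * x, c x' - a' * x'} : Set F).ncard = 3 :=
    Set.ncard_eq_three.2 ⟨_, _, _, hbx x, hbx x', hne, rfl⟩
  have hsub : ({b, c x - a' * x, c x' - a' * x'} : Set F) ⊆ p ⁻¹' {p (c x - a' * x)} := by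
    rintro z (rfl | rfl | rfl)
    · exact hb
    · rfl
    · exact heq.symm
  have := Set.ncard_le_ncard hsub (Set.toFinite _)
  rw [h3, hp] at this
  omega

theorem stmt13 : ∀ n : ℕ, ∃ D : ℕ, n ≤ D ∧
    ∃ (V W : Type) (_ : Fintype V) (_ : Fintype W)
      (G : SimpleGraph V) (H : SimpleGraph W)
      (AG BG : Set V) (AH BH : Set W) (L : V → Set W),
      IsBipartiteCorrespondenceCover G H AG BG AH BH L ∧
      (∀ x : W, deg H x ≤ D) ∧
      (∀ v ∈ AG, (L v).ncard = D - 2) ∧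
      (∀ w ∈ BG, (L w).ncard = 2) ∧
      ¬ HasIndepTransversal H L := by
  intro n
  let F := GaloisField 2 (n + 1)
  let Q := Fin (2 ^ n)
  let _ : Fintype F := Fintype.ofFinite F
  have hF : Fintype.card F = 2 * 2 ^ n := by
    rw [← Nat.card_eq_fintype_card, GaloisField.card 2 (n + 1) (by omega), pow_succ']
  have hc : Fintype.card F = 2 * Fintype.card Q := by rw [hF, Fintype.card_fin]
  let e : F ≃ Fin 2 × Q := Fintype.equivOfCardEq (by rw [hc]; simp)
  let p : F → Q := fun b => (e b).2
  have hp : ∀ r, (p ⁻¹' {r}).ncard = 2 := by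
    intro r
    have : p ⁻¹' {r} = (fun i : Fin 2 => e.symm (i, r)) '' Set.univ := by
      ext b
      simp only [p, Set.mem_preimage, Set.mem_singleton_iff, Set.image_univ, Set.mem_range,
        Equiv.symm_apply_eq]
      exact ⟨fun h => ⟨(e b).1, by rw [← h]⟩, fun ⟨i, h⟩ => by rw [← h]⟩
    rw [this, Set.ncard_image_of_injective _ (fun i j h => by simpa using h), Set.ncard_univ]
    simp
  refine ⟨Fintype.card F + 2, ?_, F ⊕ (F × Q), (F × F) ⊕ (F × F), inferInstance, inferInstance,
    completeBipartiteGraph F (F × Q), incGraph F, Set.range Sum.inl, Set.range Sum.inr,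
    Set.range Sum.inl, Set.range Sum.inr, fun v => partOf p ⁻¹' {v}, isCover_incGraph p,
    fun x => (deg_incGraph_le x).trans (by omega), ?_, ?_, not_hasIndepTransversal p hp hc⟩
  · have := Nat.lt_two_pow_self (n := n)
    omega
  · rintro _ ⟨x, rfl⟩
    exact ncard_partOf_inl p x
  · rintro _ ⟨⟨a, r⟩, rfl⟩
    exact (ncard_partOf_inr p a r).trans (hp r)
end
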